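/- arXiv:1205.4803 — 2 statements merged into one kernel-verified Lean document; each statement's English description precedes it below -/
import Mathlib

section
/- For every complex t with Re(t) > 1, 2·L(χ_{12}, t)·L(χ_{−4}, t) = Σ′_{m,n} [ 1/(m² + 12n²)^t − 1/(3m² + 4n²)^t ]. -/
/-!
The two sides are Dirichlet series, and their coefficients are compared. Grouping the lattice
points by the value of the form (`hasSum_form`), the right-hand side has `N`-th coefficient
`#{m² + 12n² = N} - #{3m² + 4n² = N}`. The left-hand side is the L-series of twice the Dirichlet
convolution of `chi12` and `chiNeg4`; since `chi12 = chiNeg4 · chi3`, where `chi3` is the quadratic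
character modulo 3, its `N`-th coefficient is `2 · chiNeg4 N · ∑_{d ∣ N} chi3 d`.

For even `N` both coefficients vanish: `m` must be even in both forms, and halving it identifies
either solution set with that of `4(x² + 3y²) = N`. For odd `N`, a solution of `x² + 3y² = N` has
exactly one even coordinate: `y` if `N ≡ 1 (mod 4)`, which gives `m² + 12n²`, and `x` if
`N ≡ 3 (mod 4)`, which gives `3m² + 4n²`. So everything reduces to the classical formula
`#{x² + 3y² = N} = 2 ∑_{d ∣ N} chi3 d` for odd `N` (`reps_ncard`).

Writing `r(N)` for the left side of that formula, it is proved by induction on `N` from the Hecke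
relation `r(pM) = (1 + chi3 p) r(M) - chi3 p · r(M/p)` for odd primes `p` (`reps_mul`), with
`r(M/p) = 0` if `p ∤ M`; the divisor sum satisfies the same relation (`divSum_mul`). For
`p ≡ 2 (mod 3)`, `-3` is not a square modulo `p`, so `p` divides both coordinates of any
representation of `pM`. For `p ≡ 1 (mod 3)` one has `p = a² + 3b²`, and the elements of norm `pM` in
`ℤ[√-3]` are those divisible by one of the two conjugate prime elements above `p`; each of these
two sets is in bijection with the elements of norm `M`, and their intersection is the set of
multiples of `p`, so the relation is inclusion–exclusion.
-/

/-- The Dirichlet `L`-series `L(χ, t) = Σ_{n ≥ 1} χ(n)·n^{−t}` of an arithmetic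
function `χ` (with `χ 0 = 0`). -/
noncomputable def dirichletL (χ : ℕ → ℂ) (t : ℂ) : ℂ := ∑' n : ℕ, χ n / (n : ℂ) ^ t

/-- The even quadratic Dirichlet character modulo 12. -/
def chi12 (n : ℕ) : ℂ :=
  if n % 12 = 1 ∨ n % 12 = 11 then 1 else if n % 12 = 5 ∨ n % 12 = 7 then -1 else 0

/-- The odd quadratic Dirichlet character modulo 4. -/
def chiNeg4 (n : ℕ) : ℂ := if n % 4 = 1 then 1 else if n % 4 = 3 then -1 else 0


/-- The integer solutions of `x² + 3y² = N`, i.e. the elements of norm `N` in `ℤ[√-3]`. -/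
def reps (N : ℕ) : Set (ℤ × ℤ) := {v | v.1 ^ 2 + 3 * v.2 ^ 2 = N}

/-- The integer solutions of `p(x² + 3y²) = M`: for `p > 0`, the representations of `M / p` when `p ∣ M`,
and none otherwise. -/
def scaledReps (p M : ℕ) : Set (ℤ × ℤ) := {v | p * (v.1 ^ 2 + 3 * v.2 ^ 2) = (M : ℤ)}

/-- The quadratic Dirichlet character modulo 3. -/
def chi3 (n : ℕ) : ℤ := if n % 3 = 1 then 1 else if n % 3 = 2 then -1 else 0

/-- The divisor sum `∑_{d ∣ N} chi3 d`. -/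
def divSum (N : ℕ) : ℤ := ∑ d ∈ N.divisors, chi3 d

/-! ### Sets of representations -/

lemma finite_of_bound (S : Set (ℤ × ℤ)) (N : ℤ)
    (h : ∀ v ∈ S, v.1 ^ 2 ≤ N ∧ v.2 ^ 2 ≤ N) : S.Finite := by
  refine ((Set.finite_Icc (-N) N).prod (Set.finite_Icc (-N) N)).subset fun v hv => ?_
  obtain ⟨h1, h2⟩ := h v hv
  have key : ∀ x : ℤ, x ^ 2 ≤ N → -N ≤ x ∧ x ≤ N := fun x hx =>
    ⟨by nlinarith [Int.le_self_sq (-x)], (Int.le_self_sq x).trans hx⟩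
  exact ⟨key _ h1, key _ h2⟩

lemma reps_finite (N : ℕ) : (reps N).Finite := by
  refine finite_of_bound _ N fun v hv => ?_
  have hv' : v.1 ^ 2 + 3 * v.2 ^ 2 = N := hv
  constructor <;> nlinarith [sq_nonneg v.1, sq_nonneg v.2]

lemma chi3_mul (a b : ℕ) : chi3 (a * b) = chi3 a * chi3 b := by
  unfold chi3
  rw [Nat.mul_mod]
  have ha : a % 3 < 3 := Nat.mod_lt _ (by norm_num)
  have hb : b % 3 < 3 := Nat.mod_lt _ (by norm_num)
  interval_cases a % 3 <;> interval_cases b % 3 <;> simp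

lemma scaledReps_ncard (p M : ℕ) (hp : 0 < p) :
    (scaledReps p M).ncard = if p ∣ M then (reps (M / p)).ncard else 0 := by
  split_ifs with h
  · obtain ⟨k, rfl⟩ := h
    rw [Nat.mul_div_cancel_left _ hp]
    congr 1
    ext v
    have : (p : ℤ) ≠ 0 := by exact_mod_cast hp.ne'
    simp [scaledReps, reps, hp.ne']
  · have : scaledReps p M = ∅ := by
      ext v
      simp only [scaledReps, Set.mem_ofPred_eq, Set.mem_empty_iff_false, iff_false]
      intro hv
      exact h (Int.natCast_dvd_natCast.mp (Dvd.intro _ hv))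
    simp [this]

lemma scaledReps_image (p M : ℕ) (hp : 0 < p) :
    (fun v : ℤ × ℤ => ((p : ℤ) * v.1, (p : ℤ) * v.2)) '' scaledReps p M =
      {v ∈ reps (p * M) | (p : ℤ) ∣ v.1 ∧ (p : ℤ) ∣ v.2} := by
  have hp0 : (p : ℤ) ≠ 0 := by exact_mod_cast hp.ne'
  ext ⟨x, y⟩
  simp only [scaledReps, reps, Set.mem_image, Set.mem_ofPred_eq, Prod.mk.injEq, Prod.exists]
  constructor
  · rintro ⟨u, v, h, rfl, rfl⟩
    refine ⟨?_, Dvd.intro _ rfl, Dvd.intro _ rfl⟩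
    push_cast
    rw [← h]; ring
  · rintro ⟨h, ⟨u, rfl⟩, ⟨v, rfl⟩⟩
    refine ⟨u, v, ?_, rfl, rfl⟩
    push_cast at h
    apply mul_left_cancel₀ hp0
    rw [← h]; ring

lemma ncard_divisible (p M : ℕ) (hp : 0 < p) :
    {v ∈ reps (p * M) | (p : ℤ) ∣ v.1 ∧ (p : ℤ) ∣ v.2}.ncard =
      if p ∣ M then (reps (M / p)).ncard else 0 := by
  have hp0 : (p : ℤ) ≠ 0 := by exact_mod_cast hp.ne'
  rw [← scaledReps_image p M hp, Set.ncard_image_of_injective, scaledReps_ncard p M hp]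
  rintro ⟨a, b⟩ ⟨c, d⟩ h
  simpa [hp.ne'] using h

/-! ### The Hecke relation for the divisor sum -/

/-- The divisors of `pM` are those of `M` together with their multiples by `p`, and the overlap
of the two families consists of `p` times the divisors of `M / p`. -/
lemma divSum_mul (p M : ℕ) (hp : p.Prime) (hM : 0 < M) :
    divSum (p * M) = (1 + chi3 p) * divSum M - chi3 p * (if p ∣ M then divSum (M / p) else 0) := by
  classical
  have hinj : Function.Injective (fun d : ℕ => p * d) := fun a b h =>
    Nat.eq_of_mul_eq_mul_left hp.pos h
  have hU : (p * M).divisors = M.divisors ∪ M.divisors.image (p * ·) := by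
    ext d
    simp only [Nat.mem_divisors, Finset.mem_union, Finset.mem_image]
    have h0 : p * M ≠ 0 := (Nat.mul_pos hp.pos hM).ne'
    constructor
    · rintro ⟨hd, -⟩
      by_cases hpd : p ∣ d
      · obtain ⟨e, rfl⟩ := hpd
        exact Or.inr ⟨e, ⟨Nat.dvd_of_mul_dvd_mul_left hp.pos hd, hM.ne'⟩, rfl⟩
      · exact Or.inl ⟨(((hp.coprime_iff_not_dvd).2 hpd).symm).dvd_of_dvd_mul_left hd, hM.ne'⟩
    · rintro (⟨h, -⟩ | ⟨e, ⟨h, -⟩, rfl⟩)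
      · exact ⟨h.mul_left p, h0⟩
      · exact ⟨mul_dvd_mul_left p h, h0⟩
  have hI : M.divisors ∩ M.divisors.image (p * ·) =
      (if p ∣ M then (M / p).divisors else ∅).image (p * ·) := by
    split_ifs with h
    · obtain ⟨k, rfl⟩ := h
      rw [Nat.mul_div_cancel_left _ hp.pos]
      have hk : k ≠ 0 := by rintro rfl; simp at hM
      ext d
      simp only [Nat.mem_divisors, Finset.mem_inter, Finset.mem_image]
      constructor
      · rintro ⟨⟨h1, -⟩, e, -, rfl⟩
        exact ⟨e, ⟨Nat.dvd_of_mul_dvd_mul_left hp.pos h1, hk⟩, rfl⟩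
      · rintro ⟨e, ⟨h, -⟩, rfl⟩
        exact ⟨⟨mul_dvd_mul_left p h, hM.ne'⟩, e, ⟨h.mul_left p, hM.ne'⟩, rfl⟩
    · ext d
      simp only [Nat.mem_divisors, Finset.mem_inter, Finset.mem_image]
      constructor
      · rintro ⟨⟨h1, -⟩, e, -, rfl⟩
        exact absurd ((Dvd.intro _ rfl).trans h1) h
      · simp
  have hs : ∀ s : Finset ℕ, ∑ d ∈ s.image (p * ·), chi3 d = chi3 p * ∑ d ∈ s, chi3 d := by
    intro s
    rw [Finset.sum_image (fun a _ b _ h => hinj h), Finset.mul_sum]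
    exact Finset.sum_congr rfl fun d _ => chi3_mul p d
  have key := Finset.sum_union_inter (s₁ := M.divisors) (s₂ := M.divisors.image (p * ·)) (f := chi3)
  rw [← hU, hI, hs, hs] at key
  unfold divSum
  split_ifs at key ⊢ with h
  · linear_combination key
  · rw [Finset.sum_empty] at key
    linear_combination key

/-! ### The primes of the form `a² + 3b²` -/

/-- If `z² = -3` then `(z - 1) / 2` is a primitive cube root of unity modulo `p`, so `3 ∣ p - 1`. -/
lemma prime_mod_three_of_sq {p : ℕ} [Fact p.Prime] (h2 : p ≠ 2) (h3 : p ≠ 3) (z : ZMod p)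
    (hz : z ^ 2 = -3) : p % 3 = 1 := by
  have hp : p.Prime := Fact.out
  have n2 : (2 : ZMod p) ≠ 0 := by
    intro h
    have : p ∣ 2 := (ZMod.natCast_eq_zero_iff 2 p).1 (by exact_mod_cast h)
    exact h2 ((Nat.prime_dvd_prime_iff_eq hp Nat.prime_two).1 this)
  have n3 : (3 : ZMod p) ≠ 0 := by
    intro h
    have : p ∣ 3 := (ZMod.natCast_eq_zero_iff 3 p).1 (by exact_mod_cast h)
    exact h3 ((Nat.prime_dvd_prime_iff_eq hp Nat.prime_three).1 this)
  set w : ZMod p := (z - 1) / 2 with hw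
  have hzw : z = 2 * w + 1 := by rw [hw]; field_simp; ring
  have hw2 : w ^ 2 + w + 1 = 0 := by
    have : (2 : ZMod p) ^ 2 * (w ^ 2 + w + 1) = 0 := by
      rw [hzw] at hz; linear_combination hz
    exact (mul_eq_zero.1 this).resolve_left (pow_ne_zero 2 n2)
  have hw3 : w ^ 3 = 1 := by linear_combination (w - 1) * hw2
  have hw1 : w ≠ 1 := by
    rintro h
    rw [h] at hw2
    exact n3 (by linear_combination hw2)
  have ho : orderOf w = 3 := orderOf_eq_prime hw3 hw1
  have hw0 : w ≠ 0 := by rintro h; rw [h] at hw2; simp at hw2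
  have : 3 ∣ p - 1 := ho ▸ ZMod.orderOf_dvd_card_sub_one hw0
  have := hp.one_lt
  omega

/-- An element `w` of order 3 in `(ℤ/p)ˣ` satisfies `(2w + 1)² = -3`. -/
lemma exists_sq_eq_neg_three {p : ℕ} [Fact p.Prime] (h : p % 3 = 1) :
    ∃ z : ZMod p, z ^ 2 = -3 := by
  have hp : p.Prime := Fact.out
  have : Fact (Nat.Prime 3) := ⟨Nat.prime_three⟩
  have hc : 3 ∣ Fintype.card (ZMod p)ˣ := by
    rw [ZMod.card_units]; omega
  obtain ⟨w, hw⟩ := exists_prime_orderOf_dvd_card 3 hc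
  have hw3 : (w : ZMod p) ^ 3 = 1 := by
    have := pow_orderOf_eq_one w
    rw [hw] at this
    simpa using congrArg Units.val this
  have hw1 : (w : ZMod p) - 1 ≠ 0 := by
    intro h
    have : w = 1 := Units.ext (by simpa using sub_eq_zero.1 h)
    rw [this] at hw
    simp at hw
  have hw2 : (w : ZMod p) ^ 2 + w + 1 = 0 := by
    have : ((w : ZMod p) - 1) * ((w : ZMod p) ^ 2 + w + 1) = 0 := by linear_combination hw3
    exact (mul_eq_zero.1 this).resolve_left hw1
  exact ⟨2 * w + 1, by linear_combination 4 * hw2⟩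

/-- Thue's lemma: by the pigeonhole principle, two of the pairs `(i, j)` with `0 ≤ i, j ≤ ⌊√p⌋`
have the same value of `i - z j` modulo `p`. -/
lemma exists_small {p : ℕ} [Fact p.Prime] (z : ZMod p) :
    ∃ x y : ℤ, (x, y) ≠ (0, 0) ∧ x ^ 2 < p ∧ y ^ 2 < p ∧ (x : ZMod p) = z * y := by
  have hp : p.Prime := Fact.out
  classical
  set s := Nat.sqrt p with hs
  have hs1 : s * s ≤ p := Nat.sqrt_le p
  have hs2 : p < (s + 1) * (s + 1) := Nat.lt_succ_sqrt p
  have hs3 : s * s < p := by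
    refine lt_of_le_of_ne hs1 fun h => ?_
    have := hp.eq_one_or_self_of_dvd s ⟨s, h.symm⟩
    rcases this with h1 | h1
    · rw [h1] at h; exact hp.one_lt.ne h
    · rw [h1] at h; nlinarith [hp.one_lt]
  obtain ⟨⟨a, b⟩, hab, ⟨c, d⟩, hcd, hne, heq⟩ :=
    Finset.exists_ne_map_eq_of_card_lt_of_maps_to
      (s := Finset.range (s + 1) ×ˢ Finset.range (s + 1)) (t := (Finset.univ : Finset (ZMod p)))
      (f := fun v : ℕ × ℕ => (v.1 : ZMod p) - z * v.2)
      (by simpa [Finset.card_product, ZMod.card] using hs2) (by intro v _; simp)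
  simp only [Finset.mem_product, Finset.mem_range] at hab hcd
  have bound : ∀ i j : ℕ, i < s + 1 → j < s + 1 → ((i : ℤ) - j) ^ 2 < p := by
    intro i j hi hj
    have hs3' : (s : ℤ) * s < p := by exact_mod_cast hs3
    have : |(i : ℤ) - j| ≤ s := by rw [abs_le]; omega
    have := sq_le_sq' (abs_le.1 this).1 (abs_le.1 this).2
    nlinarith
  refine ⟨(a : ℤ) - c, (b : ℤ) - d, ?_, bound _ _ hab.1 hcd.1, bound _ _ hab.2 hcd.2, ?_⟩
  · intro h
    simp only [Prod.mk.injEq, sub_eq_zero, Nat.cast_inj] at h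
    exact hne (by simp [h.1, h.2])
  · push_cast
    simp only at heq
    linear_combination heq

/-- Thue's lemma gives `x² + 3y² = kp` with `0 < k < 4`; `k = 2` is impossible modulo 4, and for
`k = 3` one divides by 3. -/
lemma prime_eq_sq_add {p : ℕ} [Fact p.Prime] (h2 : p ≠ 2) (h : p % 3 = 1) :
    ∃ a b : ℤ, (p : ℤ) = a ^ 2 + 3 * b ^ 2 := by
  have hp : p.Prime := Fact.out
  obtain ⟨z, hz⟩ := exists_sq_eq_neg_three h
  obtain ⟨x, y, hne, hx, hy, hxy⟩ := exists_small z
  have hd : (p : ℤ) ∣ x ^ 2 + 3 * y ^ 2 := by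
    rw [← ZMod.intCast_zmod_eq_zero_iff_dvd]
    push_cast
    rw [hxy]
    linear_combination (y : ZMod p) ^ 2 * hz
  obtain ⟨k, hk⟩ := hd
  have hp0 : (0 : ℤ) < p := by exact_mod_cast hp.pos
  have hpos : 0 < x ^ 2 + 3 * y ^ 2 := by
    by_contra hcon
    have hx0 : x ^ 2 = 0 := by nlinarith [sq_nonneg x, sq_nonneg y]
    have hy0 : y ^ 2 = 0 := by nlinarith [sq_nonneg x, sq_nonneg y]
    exact hne (by simp_all)
  have hk0 : 0 < k := by
    by_contra hcon
    nlinarith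
  have hk4 : k < 4 := by
    by_contra hcon
    nlinarith
  have hodd : p % 2 = 1 := hp.eq_two_or_odd.resolve_left h2
  interval_cases k
  · exact ⟨x, y, by linarith⟩
  · exfalso
    obtain ⟨q, hq⟩ : ∃ q : ℤ, (p : ℤ) = 2 * q + 1 := ⟨(p : ℤ) / 2, by omega⟩
    rw [hq] at hk
    rcases Int.even_or_odd' x with ⟨u, rfl | rfl⟩ <;>
      rcases Int.even_or_odd' y with ⟨v, rfl | rfl⟩ <;> ring_nf at hk <;> omega
  · have h3 : (3 : ℤ) ∣ x ^ 2 := ⟨p - y ^ 2, by linarith⟩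
    obtain ⟨u, rfl⟩ := Int.prime_three.dvd_of_dvd_pow h3
    exact ⟨y, u, by nlinarith⟩

/-! ### The Hecke relation for representation numbers -/

/-- The map `α ↦ (a + b√-3) · ᾱ`, multiplication by an element of norm `p` after conjugation, is a
bijection from the elements of norm `M` onto the elements `x + y√-3` of norm `pM` divisible by
`a + b√-3`. The latter are cut out by the condition `p ∣ b x - a y`. -/
lemma ncard_twisted {p M : ℕ} (hp : p.Prime) (a b : ℤ) (hab : (p : ℤ) = a ^ 2 + 3 * b ^ 2) :
    {v ∈ reps (p * M) | (p : ℤ) ∣ b * v.1 - a * v.2}.ncard = (reps M).ncard := by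
  have hp0 : (p : ℤ) ≠ 0 := by exact_mod_cast hp.ne_zero
  have hpp : Prime (p : ℤ) := Nat.prime_iff_prime_int.1 hp
  have him : {v ∈ reps (p * M) | (p : ℤ) ∣ b * v.1 - a * v.2} =
      (fun v : ℤ × ℤ => (a * v.1 + 3 * b * v.2, b * v.1 - a * v.2)) '' reps M := by
    ext ⟨x, y⟩
    simp only [reps, Set.mem_image, Set.mem_ofPred_eq, Prod.mk.injEq, Prod.exists]
    push_cast
    constructor
    · rintro ⟨h, v, hv⟩
      -- `(ax + 3by)² + 3(bx - ay)² = (a² + 3b²)(x² + 3y²) = p · pM`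
      have h1 : (p : ℤ) ∣ (a * x + 3 * b * y) ^ 2 := by
        refine ⟨p * M - 3 * p * v ^ 2, ?_⟩
        linear_combination p * h - (x^2 + 3*y^2) * hab - 3 * (b * x - a * y + p * v) * hv
      obtain ⟨u, hu⟩ := hpp.dvd_of_dvd_pow h1
      have hx : a * u + 3 * b * v = x := by
        apply mul_left_cancel₀ hp0
        linear_combination -a * hu - 3 * b * hv - x * hab
      have hy : b * u - a * v = y := by
        apply mul_left_cancel₀ hp0
        linear_combination -b * hu + a * hv - y * hab
      refine ⟨u, v, ?_, hx, hy⟩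
      apply mul_left_cancel₀ hp0
      rw [← h, ← hx, ← hy, hab]
      ring
    · rintro ⟨u, v, h, rfl, rfl⟩
      refine ⟨?_, v, ?_⟩
      · rw [← h, hab]; ring
      · rw [hab]; ring
  rw [him, Set.ncard_image_of_injective]
  rintro ⟨u, v⟩ ⟨u', v'⟩ h
  simp only [Prod.mk.injEq] at h ⊢
  constructor <;> apply mul_left_cancel₀ hp0 <;> rw [hab]
  · linear_combination a * h.1 + 3 * b * h.2
  · linear_combination b * h.1 - a * h.2

lemma reps_three_mul (M : ℕ) : (reps (3 * M)).ncard = (reps M).ncard := by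
  have : reps (3 * M) = (fun v : ℤ × ℤ => (3 * v.2, v.1)) '' reps M := by
    ext ⟨x, y⟩
    simp only [reps, Set.mem_image, Set.mem_ofPred_eq, Prod.mk.injEq, Prod.exists]
    push_cast
    constructor
    · intro h
      have h3 : (3 : ℤ) ∣ x ^ 2 := ⟨M - y ^ 2, by linarith⟩
      obtain ⟨u, rfl⟩ := Int.prime_three.dvd_of_dvd_pow h3
      exact ⟨u, by linarith, rfl, rfl⟩
    · rintro ⟨v, h, rfl, -⟩
      rw [← h]; ring
  rw [this, Set.ncard_image_of_injective]
  rintro ⟨u, v⟩ ⟨u', v'⟩ h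
  simp only [Prod.mk.injEq] at h ⊢
  omega

/-- The Hecke relation at an odd prime `p` for the number of representations by `x² + 3y²`. -/
lemma reps_mul (p M : ℕ) (hp : p.Prime) (h2 : p ≠ 2) :
    ((reps (p * M)).ncard : ℤ) = (1 + chi3 p) * (reps M).ncard -
      chi3 p * ((if p ∣ M then (reps (M / p)).ncard else 0 : ℕ) : ℤ) := by
  have : Fact p.Prime := ⟨hp⟩
  have hp0 : (p : ℤ) ≠ 0 := by exact_mod_cast hp.ne_zero
  have hpp : Prime (p : ℤ) := Nat.prime_iff_prime_int.1 hp
  rcases (by omega : p % 3 = 0 ∨ p % 3 = 1 ∨ p % 3 = 2) with h | h | h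
  · have h3 : p = 3 :=
      ((Nat.prime_dvd_prime_iff_eq Nat.prime_three hp).1 (Nat.dvd_of_mod_eq_zero h)).symm
    subst h3
    simp [chi3, reps_three_mul]
  · obtain ⟨a, b, hab⟩ := prime_eq_sq_add h2 h
    have hp2 : ¬ (p : ℤ) ∣ 2 := by
      intro hd
      exact h2 ((Nat.prime_dvd_prime_iff_eq hp Nat.prime_two).1 (by exact_mod_cast hd))
    have hp3 : ¬ (p : ℤ) ∣ 3 := by
      intro hd
      have := (Nat.prime_dvd_prime_iff_eq hp Nat.prime_three).1 (by exact_mod_cast hd)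
      omega
    have hppos : (0 : ℤ) < p := by exact_mod_cast hp.pos
    have hb : ¬ (p : ℤ) ∣ b := by
      intro hd
      have h1 : (p : ℤ) ∣ a ^ 2 := by
        have : a ^ 2 = p - 3 * b ^ 2 := by linarith
        rw [this]
        exact dvd_sub (dvd_refl _) ((hd.trans (dvd_pow_self b two_ne_zero)).mul_left 3)
      obtain ⟨u, rfl⟩ := hpp.dvd_of_dvd_pow h1
      obtain ⟨v, rfl⟩ := hd
      have : (p : ℤ) * (u ^ 2 + 3 * v ^ 2) = 1 := by
        apply mul_left_cancel₀ hp0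
        linear_combination -hab
      exact hpp.not_dvd_one ⟨_, this.symm⟩
    have ha : ¬ (p : ℤ) ∣ a := by
      intro hd
      have h1 : (p : ℤ) ∣ 3 * b ^ 2 := by
        have : 3 * b ^ 2 = p - a ^ 2 := by linarith
        rw [this]
        exact dvd_sub (dvd_refl _) (hd.trans (dvd_pow_self a two_ne_zero))
      exact hb (hpp.dvd_of_dvd_pow ((hpp.dvd_or_dvd h1).resolve_left hp3))
    set A := {v ∈ reps (p * M) | (p : ℤ) ∣ b * v.1 - a * v.2} with hA
    set B := {v ∈ reps (p * M) | (p : ℤ) ∣ -b * v.1 - a * v.2} with hB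
    have hU : A ∪ B = reps (p * M) := by
      ext ⟨x, y⟩
      simp only [hA, hB, Set.mem_union, Set.mem_ofPred_eq, ← and_or_left, and_iff_left_iff_imp]
      intro hv
      have hv' : x ^ 2 + 3 * y ^ 2 = (p * M : ℕ) := hv
      push_cast at hv'
      apply hpp.dvd_or_dvd
      -- `(bx - ay)(-bx - ay) = a²y² - b²x² = p y² - b² (x² + 3y²)`
      refine ⟨y ^ 2 - b ^ 2 * M, ?_⟩
      linear_combination -b ^ 2 * hv' - y ^ 2 * hab
    have hI : A ∩ B = {v ∈ reps (p * M) | (p : ℤ) ∣ v.1 ∧ (p : ℤ) ∣ v.2} := by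
      ext ⟨x, y⟩
      simp only [hA, hB, Set.mem_inter_iff, Set.mem_ofPred_eq]
      constructor
      · rintro ⟨⟨h1, h2⟩, -, h3⟩
        have e1 : (p : ℤ) ∣ 2 * (b * x) := by
          have := dvd_sub h2 h3
          rwa [show b * x - a * y - (-b * x - a * y) = 2 * (b * x) by ring] at this
        have e2 : (p : ℤ) ∣ 2 * (a * y) := by
          have := dvd_add h2 h3
          rw [show b * x - a * y + (-b * x - a * y) = -(2 * (a * y)) by ring] at this
          exact (dvd_neg.1 this)
        exact ⟨h1, (hpp.dvd_or_dvd ((hpp.dvd_or_dvd e1).resolve_left hp2)).resolve_left hb,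
          (hpp.dvd_or_dvd ((hpp.dvd_or_dvd e2).resolve_left hp2)).resolve_left ha⟩
      · rintro ⟨h1, h2, h3⟩
        exact ⟨⟨h1, dvd_sub (h2.mul_left _) (h3.mul_left _)⟩, h1,
          dvd_sub (h2.mul_left _) (h3.mul_left _)⟩
    have key := Set.ncard_union_add_ncard_inter A B
      ((reps_finite _).subset fun v hv => hv.1) ((reps_finite _).subset fun v hv => hv.1)
    rw [hU, hI, ncard_divisible p M hp.pos, ncard_twisted hp a b hab,
      ncard_twisted hp a (-b) (by rw [hab]; ring)] at key
    have hc : chi3 p = 1 := by simp [chi3, h]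
    rw [hc]
    have key' := congrArg (Nat.cast : ℕ → ℤ) key
    push_cast at key' ⊢
    linarith
  · have hc : chi3 p = -1 := by simp [chi3, h]
    have hall : {v ∈ reps (p * M) | (p : ℤ) ∣ v.1 ∧ (p : ℤ) ∣ v.2} = reps (p * M) := by
      ext ⟨x, y⟩
      simp only [Set.mem_ofPred_eq, and_iff_left_iff_imp]
      intro hv
      have hv' : x ^ 2 + 3 * y ^ 2 = (p * M : ℕ) := hv
      push_cast at hv'
      have hmod : (x : ZMod p) ^ 2 + 3 * (y : ZMod p) ^ 2 = 0 := by
        have := congrArg (Int.cast : ℤ → ZMod p) hv'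
        push_cast at this
        simpa using this
      have hy : (y : ZMod p) = 0 := by
        by_contra hy
        have := prime_mod_three_of_sq h2 (by rintro rfl; omega) ((x : ZMod p) / y) (by
          field_simp
          linear_combination hmod)
        omega
      have hx : (x : ZMod p) = 0 := by
        rw [hy] at hmod
        simpa using hmod
      exact ⟨(ZMod.intCast_zmod_eq_zero_iff_dvd _ _).1 hx,
        (ZMod.intCast_zmod_eq_zero_iff_dvd _ _).1 hy⟩
    have := ncard_divisible p M hp.pos
    rw [hall] at this
    rw [hc, this]
    ring

lemma reps_one : (reps 1).ncard = 2 := by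
  have : reps 1 = {((1 : ℤ), (0 : ℤ)), (-1, 0)} := by
    ext ⟨x, y⟩
    simp only [reps, Set.mem_ofPred_eq, Set.mem_insert_iff, Set.mem_singleton_iff, Prod.mk.injEq]
    constructor
    · intro h
      push_cast at h
      have hy : y = 0 := by
        by_contra hy
        have : 0 < y ^ 2 := by positivity
        nlinarith [sq_nonneg x]
      subst hy
      have : x ^ 2 = 1 := by linarith
      rcases sq_eq_sq_iff_eq_or_eq_neg.1 (this.trans (one_pow 2).symm) with h | h <;> simp [h]
    · rintro (⟨rfl, rfl⟩ | ⟨rfl, rfl⟩) <;> norm_num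
  rw [this, Set.ncard_pair (by simp)]

/-- The number of representations of an odd `N` by `x² + 3y²`. -/
lemma reps_ncard (N : ℕ) (hN : N % 2 = 1) : ((reps N).ncard : ℤ) = 2 * divSum N := by
  induction N using Nat.strong_induction_on with
  | _ N ih =>
    by_cases h1 : N = 1
    · subst h1
      simp [reps_one, divSum, chi3]
    · obtain ⟨p, hp, M, rfl⟩ := Nat.exists_prime_and_dvd h1
      have hM : 0 < M := Nat.pos_of_ne_zero (by rintro rfl; simp at hN)
      have hodd : p % 2 = 1 ∧ M % 2 = 1 := by
        simpa [← Nat.odd_iff, Nat.odd_mul] using hN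
      have h2 : p ≠ 2 := by rintro rfl; simp at hodd
      have hlt : M < p * M := by nlinarith [hp.one_lt]
      rw [reps_mul p M hp h2, divSum_mul p M hp hM, ih M hlt hodd.2]
      split_ifs with hd
      · obtain ⟨k, rfl⟩ := hd
        rw [Nat.mul_div_cancel_left _ hp.pos]
        have hk : k % 2 = 1 := by
          have := hodd.2
          rw [← Nat.odd_iff, Nat.odd_mul] at this
          exact Nat.odd_iff.1 this.2
        have hk0 : 0 < k := by omega
        rw [ih k (by nlinarith [hp.one_lt]) hk]
        ring
      · push_cast; ring

/-! ### The two forms of discriminant -48 -/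

/-- The form `m² + 12n²`, valued in `ℕ`; the form is nonnegative, so `Int.toNat` loses nothing. -/
def principalForm (v : ℤ × ℤ) : ℕ := (v.1 ^ 2 + 12 * v.2 ^ 2).toNat

/-- The form `3m² + 4n²`, valued in `ℕ`; the form is nonnegative, so `Int.toNat` loses nothing. -/
def otherForm (v : ℤ × ℤ) : ℕ := (3 * v.1 ^ 2 + 4 * v.2 ^ 2).toNat

lemma principalForm_cast (v : ℤ × ℤ) : (principalForm v : ℤ) = v.1 ^ 2 + 12 * v.2 ^ 2 :=
  Int.toNat_of_nonneg (by positivity)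

lemma otherForm_cast (v : ℤ × ℤ) : (otherForm v : ℤ) = 3 * v.1 ^ 2 + 4 * v.2 ^ 2 :=
  Int.toNat_of_nonneg (by positivity)

lemma mem_principal (v : ℤ × ℤ) (N : ℕ) :
    v ∈ principalForm ⁻¹' {N} ↔ v.1 ^ 2 + 12 * v.2 ^ 2 = (N : ℤ) := by
  rw [← principalForm_cast]; simp

lemma mem_other (v : ℤ × ℤ) (N : ℕ) :
    v ∈ otherForm ⁻¹' {N} ↔ 3 * v.1 ^ 2 + 4 * v.2 ^ 2 = (N : ℤ) := by
  rw [← otherForm_cast]; simp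

lemma ncard_principal_of_mod_four_eq_one (N : ℕ) (hN : N % 4 = 1) :
    (principalForm ⁻¹' {N}).ncard = (reps N).ncard := by
  have : reps N = (fun v : ℤ × ℤ => (v.1, 2 * v.2)) '' (principalForm ⁻¹' {N}) := by
    ext ⟨x, y⟩
    rw [Set.mem_image]
    simp only [mem_principal, Prod.mk.injEq, Prod.exists]
    constructor
    · intro h
      have h' : x ^ 2 + 3 * y ^ 2 = N := h
      rcases Int.even_or_odd' x with ⟨u, rfl | rfl⟩ <;>
        rcases Int.even_or_odd' y with ⟨v, rfl | rfl⟩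
      · exact ⟨2 * u, v, by linarith, rfl, rfl⟩
      · exfalso; ring_nf at h'; omega
      · exact ⟨2 * u + 1, v, by linarith, rfl, rfl⟩
      · exfalso; ring_nf at h'; omega
    · rintro ⟨u, v, h, rfl, rfl⟩
      change u ^ 2 + 3 * (2 * v) ^ 2 = (N : ℤ)
      linarith
  rw [this, Set.ncard_image_of_injective]
  rintro ⟨u, v⟩ ⟨u', v'⟩ h
  simp only [Prod.mk.injEq] at h ⊢
  omega

lemma ncard_other_of_mod_four_eq_three (N : ℕ) (hN : N % 4 = 3) :
    (otherForm ⁻¹' {N}).ncard = (reps N).ncard := by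
  have : reps N = (fun v : ℤ × ℤ => (2 * v.2, v.1)) '' (otherForm ⁻¹' {N}) := by
    ext ⟨x, y⟩
    rw [Set.mem_image]
    simp only [mem_other, Prod.exists]
    constructor
    · intro h
      have h' : x ^ 2 + 3 * y ^ 2 = N := h
      rcases Int.even_or_odd' x with ⟨u, rfl | rfl⟩ <;>
        rcases Int.even_or_odd' y with ⟨v, rfl | rfl⟩
      · exfalso; ring_nf at h'; omega
      · exact ⟨2 * v + 1, u, by linarith, rfl⟩
      · exfalso; ring_nf at h'; omega
      · exfalso; ring_nf at h'; omega
    · rintro ⟨u, v, h, h'⟩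
      obtain ⟨rfl, rfl⟩ := Prod.mk.inj h'
      change (2 * v) ^ 2 + 3 * u ^ 2 = (N : ℤ)
      linarith
  rw [this, Set.ncard_image_of_injective]
  rintro ⟨u, v⟩ ⟨u', v'⟩ h
  simp only [Prod.mk.injEq] at h ⊢
  omega

lemma principal_eq_empty (N : ℕ) (hN : N % 4 = 3) : principalForm ⁻¹' {N} = ∅ := by
  ext ⟨x, y⟩
  simp only [mem_principal, Set.mem_empty_iff_false, iff_false]
  intro h
  rcases Int.even_or_odd' x with ⟨u, rfl | rfl⟩ <;> ring_nf at h <;> omega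

lemma other_eq_empty (N : ℕ) (hN : N % 4 = 1) : otherForm ⁻¹' {N} = ∅ := by
  ext ⟨x, y⟩
  simp only [mem_other, Set.mem_empty_iff_false, iff_false]
  intro h
  rcases Int.even_or_odd' x with ⟨u, rfl | rfl⟩ <;> ring_nf at h <;> omega

lemma ncard_principal_eq_ncard_other (N : ℕ) (hN : N % 2 = 0) :
    (principalForm ⁻¹' {N}).ncard = (otherForm ⁻¹' {N}).ncard := by
  set T : Set (ℤ × ℤ) := {v | 4 * (v.1 ^ 2 + 3 * v.2 ^ 2) = (N : ℤ)} with hT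
  have h1 : principalForm ⁻¹' {N} = (fun v : ℤ × ℤ => (2 * v.1, v.2)) '' T := by
    ext ⟨x, y⟩
    rw [Set.mem_image]
    simp only [mem_principal, hT, Prod.exists, Set.mem_ofPred_eq]
    constructor
    · intro h
      rcases Int.even_or_odd' x with ⟨u, rfl | rfl⟩
      · exact ⟨u, y, by linarith, rfl⟩
      · exfalso; ring_nf at h; omega
    · rintro ⟨u, v, h, h'⟩
      obtain ⟨rfl, rfl⟩ := Prod.mk.inj h'
      linarith
  have h2 : otherForm ⁻¹' {N} = (fun v : ℤ × ℤ => (2 * v.2, v.1)) '' T := by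
    ext ⟨x, y⟩
    rw [Set.mem_image]
    simp only [mem_other, hT, Prod.exists, Set.mem_ofPred_eq]
    constructor
    · intro h
      rcases Int.even_or_odd' x with ⟨u, rfl | rfl⟩
      · exact ⟨y, u, by linarith, rfl⟩
      · exfalso; ring_nf at h; omega
    · rintro ⟨u, v, h, h'⟩
      obtain ⟨rfl, rfl⟩ := Prod.mk.inj h'
      linarith
  rw [h1, h2, Set.ncard_image_of_injective, Set.ncard_image_of_injective] <;>
  · rintro ⟨u, v⟩ ⟨u', v'⟩ h
    simp only [Prod.mk.injEq] at h ⊢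
    omega

/-! ### Comparison of coefficients -/

lemma chiNeg4_mul (a b : ℕ) : chiNeg4 (a * b) = chiNeg4 a * chiNeg4 b := by
  unfold chiNeg4
  rw [Nat.mul_mod]
  have ha : a % 4 < 4 := Nat.mod_lt _ (by norm_num)
  have hb : b % 4 < 4 := Nat.mod_lt _ (by norm_num)
  interval_cases a % 4 <;> interval_cases b % 4 <;> simp

/-- At even `n` both sides vanish. -/
lemma chi12_eq (n : ℕ) : chi12 n = chiNeg4 n * chi3 n := by
  unfold chi12 chiNeg4 chi3
  have h4 : n % 4 = n % 12 % 4 := by omega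
  have h3 : n % 3 = n % 12 % 3 := by omega
  rw [h4, h3]
  have ha : n % 12 < 12 := Nat.mod_lt _ (by norm_num)
  interval_cases n % 12 <;> simp

lemma convolution_eq (N : ℕ) : LSeries.convolution chi12 chiNeg4 N = chiNeg4 N * divSum N := by
  rw [LSeries.convolution_def, divSum, ← Nat.sum_divisorsAntidiagonal (fun d _ => chi3 d)]
  push_cast
  rw [Finset.mul_sum]
  refine Finset.sum_congr rfl fun p hp => ?_
  rw [← (Nat.mem_divisorsAntidiagonal.1 hp).1, chiNeg4_mul, chi12_eq]
  ring

/-- Equality of the coefficients. At `N = 0` both solution sets are `{0}` and the convolution is 0. -/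
lemma coeff_eq (N : ℕ) :
    ((principalForm ⁻¹' {N}).ncard : ℂ) - (otherForm ⁻¹' {N}).ncard =
      2 * LSeries.convolution chi12 chiNeg4 N := by
  rw [convolution_eq]
  have hr : N % 2 = 1 → ((reps N).ncard : ℂ) = 2 * divSum N := fun h => by
    exact_mod_cast congrArg (Int.cast : ℤ → ℂ) (reps_ncard N h)
  rcases (by omega : N % 2 = 0 ∨ N % 4 = 1 ∨ N % 4 = 3) with h | h | h
  · rw [ncard_principal_eq_ncard_other N h]
    have : chiNeg4 N = 0 := by
      unfold chiNeg4
      rw [if_neg (by omega), if_neg (by omega)]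
    simp [this]
  · rw [ncard_principal_of_mod_four_eq_one N h, other_eq_empty N h, hr (by omega)]
    simp [chiNeg4, h]
  · rw [ncard_other_of_mod_four_eq_three N h, principal_eq_empty N h, hr (by omega)]
    simp [chiNeg4, h]

/-! ### Dirichlet series of the forms -/

/-- The hypotheses on `q` say that it dominates the square of the sup norm, so that the terms are
bounded by `‖v‖ ^ (-2 Re t)`, which is summable over `ℤ²` because `2 Re t > 2`. -/
lemma summable_form (q : ℤ × ℤ → ℕ) (h0 : q 0 = 0) (h1 : ∀ v, v.1 ^ 2 ≤ (q v : ℤ))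
    (h2 : ∀ v, v.2 ^ 2 ≤ (q v : ℤ)) (t : ℂ) (ht : 1 < t.re) :
    Summable fun v => 1 / (q v : ℂ) ^ t := by
  have hs := EisensteinSeries.summable_one_div_norm_rpow (k := 2 * t.re) (by linarith)
  rw [← (finTwoArrowEquiv ℤ).symm.summable_iff] at hs
  refine Summable.of_norm_bounded hs fun v => ?_
  set w : Fin 2 → ℤ := (finTwoArrowEquiv ℤ).symm v with hw
  change _ ≤ ‖w‖ ^ (-(2 * t.re))
  have hw0 : w 0 = v.1 := rfl
  have hw1 : w 1 = v.2 := rfl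
  have hre : t.re ≠ 0 := by linarith
  have ht0 : t ≠ 0 := by rintro rfl; simp at hre
  rcases Nat.eq_zero_or_pos (q v) with hq | hq
  · rw [hq]
    simp only [Nat.cast_zero, Complex.zero_cpow ht0, div_zero, norm_zero]
    positivity
  · have hsq : ‖w‖ ^ 2 ≤ (q v : ℝ) := by
      have hle : ‖w‖ ≤ √(q v : ℝ) := by
        refine (pi_norm_le_iff_of_nonneg (Real.sqrt_nonneg _)).2 fun i => ?_
        apply Real.le_sqrt_of_sq_le
        rw [Int.norm_eq_abs, sq_abs]
        fin_cases i
        · exact_mod_cast h1 v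
        · exact_mod_cast h2 v
      calc ‖w‖ ^ 2 ≤ √(q v : ℝ) ^ 2 := by gcongr
        _ = (q v : ℝ) := Real.sq_sqrt (by positivity)
    have hpos : 0 < ‖w‖ := by
      rw [norm_pos_iff]
      intro hw'
      have hv : v = 0 := Prod.ext (hw0.symm.trans (by rw [hw']; rfl))
        (hw1.symm.trans (by rw [hw']; rfl))
      rw [hv, h0] at hq
      exact hq.false
    rw [norm_div, norm_one, Complex.norm_natCast_cpow_of_pos hq, Real.rpow_neg hpos.le,
      one_div, Real.rpow_mul hpos.le]
    gcongr
    exact_mod_cast hsq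

/-- Grouping the lattice points by the value of the form. The point `v = 0` and the index `N = 0`
are harmless because `1 / 0 ^ t = 0`. -/
lemma hasSum_form (q : ℤ × ℤ → ℕ) (h0 : q 0 = 0) (h1 : ∀ v, v.1 ^ 2 ≤ (q v : ℤ))
    (h2 : ∀ v, v.2 ^ 2 ≤ (q v : ℤ)) (t : ℂ) (ht : 1 < t.re) :
    HasSum (fun N : ℕ => ((q ⁻¹' {N}).ncard : ℂ) / (N : ℂ) ^ t) (∑' v, 1 / (q v : ℂ) ^ t) := by
  have key := (summable_form q h0 h1 h2 t ht).hasSum.tsum_fiberwise q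
  refine (funext fun N => ?_ : (fun N : ℕ => ((q ⁻¹' {N}).ncard : ℂ) / (N : ℂ) ^ t) = _) ▸ key
  have : ∀ v : q ⁻¹' {N}, 1 / (q v : ℂ) ^ t = 1 / (N : ℂ) ^ t := fun v => by
    rw [show q v = N from v.2]
  rw [tsum_congr this, tsum_const, Nat.card_coe_set_eq, nsmul_eq_mul]
  ring

lemma dirichletL_eq (χ : ℕ → ℂ) (h0 : χ 0 = 0) (t : ℂ) : dirichletL χ t = LSeries χ t := by
  refine tsum_congr fun n => ?_
  rcases eq_or_ne n 0 with rfl | hn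
  · simp [h0]
  · rw [LSeries.term_of_ne_zero hn]

theorem chi12_chiNeg4_lattice (t : ℂ) (ht : 1 < t.re) :
    2 * dirichletL chi12 t * dirichletL chiNeg4 t =
      ∑' p : {p : ℤ × ℤ // p ≠ 0},
        (1 / (((p : ℤ × ℤ).1 : ℂ) ^ 2 + 12 * ((p : ℤ × ℤ).2 : ℂ) ^ 2) ^ t -
          1 / (3 * ((p : ℤ × ℤ).1 : ℂ) ^ 2 + 4 * ((p : ℤ × ℤ).2 : ℂ) ^ 2) ^ t) := by
  have ht0 : t ≠ 0 := by rintro rfl; norm_num at ht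
  have hA1 : ∀ v : ℤ × ℤ, v.1 ^ 2 ≤ (principalForm v : ℤ) := fun v => by
    rw [principalForm_cast]; nlinarith [sq_nonneg v.2]
  have hA2 : ∀ v : ℤ × ℤ, v.2 ^ 2 ≤ (principalForm v : ℤ) := fun v => by
    rw [principalForm_cast]; nlinarith [sq_nonneg v.2, sq_nonneg v.1]
  have hB1 : ∀ v : ℤ × ℤ, v.1 ^ 2 ≤ (otherForm v : ℤ) := fun v => by
    rw [otherForm_cast]; nlinarith [sq_nonneg v.2, sq_nonneg v.1]
  have hB2 : ∀ v : ℤ × ℤ, v.2 ^ 2 ≤ (otherForm v : ℤ) := fun v => by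
    rw [otherForm_cast]; nlinarith [sq_nonneg v.2, sq_nonneg v.1]
  -- Both forms vanish at the origin, where `1 / 0 ^ t = 0`, so the sum extends to all of `ℤ × ℤ`.
  have hR : ∑' p : {p : ℤ × ℤ // p ≠ 0},
        (1 / (((p : ℤ × ℤ).1 : ℂ) ^ 2 + 12 * ((p : ℤ × ℤ).2 : ℂ) ^ 2) ^ t -
          1 / (3 * ((p : ℤ × ℤ).1 : ℂ) ^ 2 + 4 * ((p : ℤ × ℤ).2 : ℂ) ^ 2) ^ t) =
      ∑' v : ℤ × ℤ, (1 / (principalForm v : ℂ) ^ t - 1 / (otherForm v : ℂ) ^ t) := by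
    rw [← tsum_subtype_eq_of_support_subset (s := {p : ℤ × ℤ | p ≠ 0})]
    · refine tsum_congr fun p => ?_
      have e1 := congrArg (Int.cast : ℤ → ℂ) (principalForm_cast p)
      have e2 := congrArg (Int.cast : ℤ → ℂ) (otherForm_cast p)
      push_cast at e1 e2
      rw [e1, e2]
    · intro v hv
      rintro rfl
      exact hv (by simp [principalForm, otherForm, Complex.zero_cpow ht0])
  rw [hR, (summable_form _ rfl hA1 hA2 t ht).tsum_sub (summable_form _ rfl hB1 hB2 t ht)]
  have hsum := (hasSum_form _ rfl hA1 hA2 t ht).sub (hasSum_form _ rfl hB1 hB2 t ht)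
  rw [← hsum.tsum_eq, dirichletL_eq _ (by simp [chi12]), dirichletL_eq _ (by simp [chiNeg4]),
    mul_assoc, ← LSeries_convolution', LSeries, ← tsum_mul_left]
  · refine tsum_congr fun N => ?_
    rw [← sub_div, coeff_eq]
    rcases eq_or_ne N 0 with rfl | hN
    · simp
    · rw [LSeries.term_of_ne_zero hN]
      ring
  · refine LSeriesSummable_of_bounded_of_one_lt_re (m := 1) (fun n _ => ?_) ht
    unfold chi12
    split_ifs <;> simp
  · refine LSeriesSummable_of_bounded_of_one_lt_re (m := 1) (fun n _ => ?_) ht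
    unfold chiNeg4
    split_ifs <;> simp
end

section
/- For every complex t with Re(t) > 1, 2·L(χ_{24}, t)·L(χ_{−3}, t) = Σ′_{m,n} [ 1/(m² + 18n²)^t − 1/(2m² + 9n²)^t ]. -/
/-- The even quadratic Dirichlet character modulo 24. -/
def chi24 (n : ℕ) : ℂ :=
  if n % 24 = 1 ∨ n % 24 = 5 ∨ n % 24 = 19 ∨ n % 24 = 23 then 1
  else if n % 24 = 7 ∨ n % 24 = 11 ∨ n % 24 = 13 ∨ n % 24 = 17 then -1 else 0

/-- The quadratic Dirichlet character modulo 3. -/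
def chiNeg3 (n : ℕ) : ℂ := if n % 3 = 1 then 1 else if n % 3 = 2 then -1 else 0

/-! ### Representations by `x² + 2y²` -/

/-- The set of representations of `N` by the form `x² + 2y²`. -/
def repSet (N : ℕ) : Set (ℤ × ℤ) := {z | z.1 ^ 2 + 2 * z.2 ^ 2 = (N : ℤ)}

lemma mem_repSet {N : ℕ} {z : ℤ × ℤ} : z ∈ repSet N ↔ z.1 ^ 2 + 2 * z.2 ^ 2 = (N : ℤ) := Iff.rfl

lemma finite_repSet (N : ℕ) : (repSet N).Finite := by
  refine ((Set.finite_Icc (-(N : ℤ)) N).prod (Set.finite_Icc (-(N : ℤ)) N)).subset ?_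
  rintro ⟨x, y⟩ h
  rw [mem_repSet] at h
  have hx : x.natAbs ≤ x.natAbs ^ 2 := Nat.le_self_pow two_ne_zero _
  have hy : y.natAbs ≤ y.natAbs ^ 2 := Nat.le_self_pow two_ne_zero _
  zify at hx hy
  rw [sq_abs] at hx hy
  simp only [Set.mem_prod, Set.mem_Icc, ← abs_le]
  constructor <;> nlinarith [sq_nonneg x, sq_nonneg y]

lemma ncard_repSet_one : (repSet 1).ncard = 2 := by
  have : repSet 1 = {(1, 0), (-1, 0)} := by
    ext ⟨x, y⟩
    simp only [mem_repSet, Set.mem_insert_iff, Set.mem_singleton_iff, Prod.mk.injEq]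
    constructor
    · intro h
      have hy : y = 0 := by
        by_contra hy
        have := Int.one_le_abs hy
        have : 1 ≤ y ^ 2 := by rw [← sq_abs]; nlinarith
        push_cast at h
        nlinarith [sq_nonneg x]
      subst hy
      have : x ^ 2 = 1 := by simpa using h
      rcases sq_eq_sq_iff_eq_or_eq_neg.mp (this.trans (one_pow 2).symm) with h | h <;> simp [h]
    · rintro (⟨rfl, rfl⟩ | ⟨rfl, rfl⟩) <;> norm_num
  rw [this, Set.ncard_pair (by simp)]

/-- Multiplication by `a + b√-2` on `ℤ[√-2]`, in the coordinates `(x, y) = x + y√-2`. -/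
def mulBy (a b : ℤ) (z : ℤ × ℤ) : ℤ × ℤ := (a * z.1 - 2 * b * z.2, a * z.2 + b * z.1)

lemma mulBy_injective {a b : ℤ} (h : a ^ 2 + 2 * b ^ 2 ≠ 0) : Function.Injective (mulBy a b) := by
  rintro ⟨x, y⟩ ⟨x', y'⟩ h'
  simp only [mulBy, Prod.mk.injEq] at h' ⊢
  constructor <;> refine mul_left_cancel₀ h ?_
  · linear_combination a * h'.1 + 2 * b * h'.2
  · linear_combination a * h'.2 - b * h'.1

lemma mulBy_mem {a b : ℤ} {p N : ℕ} (hp : a ^ 2 + 2 * b ^ 2 = p) {z : ℤ × ℤ} (hz : z ∈ repSet N) :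
    mulBy a b z ∈ repSet (p * N) := by
  rw [mem_repSet] at *
  push_cast
  rw [← hp, ← hz, mulBy]
  ring

/-- If the prime `p = a² + 2b²` divides `ay - bx`, then `a + b√-2` divides the element `x + y√-2` of
norm `pN`: the product of `x + y√-2` with `a - b√-2` is a multiple of `p`. -/
lemma mem_image_mulBy {a b : ℤ} {p N : ℕ} (pp : p.Prime) (hp : a ^ 2 + 2 * b ^ 2 = p)
    {z : ℤ × ℤ} (hz : z ∈ repSet (p * N)) (hd : (p : ℤ) ∣ a * z.2 - b * z.1) :
    z ∈ mulBy a b '' repSet N := by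
  obtain ⟨x, y⟩ := z
  rw [mem_repSet] at hz
  push_cast at hz
  simp only at hz hd
  have hp0 : (p : ℤ) ≠ 0 := by exact_mod_cast pp.ne_zero
  obtain ⟨v, hv⟩ := hd
  have hu : (p : ℤ) ∣ a * x + 2 * b * y := by
    refine (Nat.prime_iff_prime_int.mp pp).dvd_of_dvd_pow (n := 2) ⟨p * N - 2 * p * v ^ 2, ?_⟩
    linear_combination (x ^ 2 + 2 * y ^ 2) * hp + (p : ℤ) * hz
      - 2 * (a * y - b * x + p * v) * hv
  obtain ⟨u, hu⟩ := hu
  refine ⟨(u, v), ?_, ?_⟩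
  · rw [mem_repSet]
    refine mul_left_cancel₀ (pow_ne_zero 2 hp0) ?_
    linear_combination (x ^ 2 + 2 * y ^ 2) * hp + (p : ℤ) * hz
      - 2 * (a * y - b * x + p * v) * hv - (a * x + 2 * b * y + p * u) * hu
  · simp only [mulBy, Prod.mk.injEq]
    constructor <;> refine mul_left_cancel₀ hp0 ?_
    · linear_combination - a * hu + 2 * b * hv + x * hp
    · linear_combination - a * hv - b * hu + y * hp

/-- The representations of `pN` with both coordinates divisible by `p` correspond to the
representations of `N / p`; there are none unless `p ∣ N`. -/
lemma ncard_scaled {p N : ℕ} (hp : p ≠ 0) :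
    ({z | z ∈ repSet (p * N) ∧ (p : ℤ) ∣ z.1 ∧ (p : ℤ) ∣ z.2}).ncard =
      if p ∣ N then (repSet (N / p)).ncard else 0 := by
  have hp0 : (p : ℤ) ≠ 0 := by exact_mod_cast hp
  split_ifs with h
  · obtain ⟨M, rfl⟩ := h
    rw [Nat.mul_div_cancel_left _ (Nat.pos_of_ne_zero hp)]
    have : {z | z ∈ repSet (p * (p * M)) ∧ (p : ℤ) ∣ z.1 ∧ (p : ℤ) ∣ z.2} =
        mulBy p 0 '' repSet M := by
      ext ⟨x, y⟩
      simp only [Set.mem_ofPred_eq, mem_repSet, Set.mem_image, mulBy, Prod.exists, Prod.mk.injEq]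
      push_cast
      constructor
      · rintro ⟨h, ⟨u, rfl⟩, ⟨v, rfl⟩⟩
        refine ⟨u, v, mul_left_cancel₀ (pow_ne_zero 2 hp0) ?_, by ring, by ring⟩
        linear_combination h
      · rintro ⟨u, v, h, rfl, rfl⟩
        refine ⟨?_, ⟨u, by ring⟩, ⟨v, by ring⟩⟩
        linear_combination (p : ℤ) ^ 2 * h
    rw [this, Set.ncard_image_of_injective _ (mulBy_injective (by simpa using hp))]
  · rw [Set.ncard_eq_zero ((finite_repSet _).subset fun z hz => hz.1)]
    ext ⟨x, y⟩
    simp only [Set.mem_ofPred_eq, mem_repSet, Set.mem_empty_iff_false, iff_false]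
    rintro ⟨h', ⟨u, rfl⟩, ⟨v, rfl⟩⟩
    apply h
    zify
    refine ⟨u ^ 2 + 2 * v ^ 2, mul_left_cancel₀ hp0 ?_⟩
    push_cast at h'
    linear_combination - h'

/-- A prime `p` modulo which `-2` is a square is of the form `a² + 2b²`. By Dirichlet's
approximation theorem there is a small nonzero `(x, y)` with `x² + 2y² ∈ {p, 2p}`. -/
lemma exists_rep_prime {p : ℕ} (pp : p.Prime) (h : IsSquare (-2 : ZMod p)) :
    ∃ a b : ℤ, a ^ 2 + 2 * b ^ 2 = p := by
  obtain ⟨s, hs⟩ := h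
  obtain ⟨s, rfl⟩ := ZMod.intCast_surjective s
  have hs : (p : ℤ) ∣ s * s + 2 := by
    rw [← ZMod.intCast_zmod_eq_zero_iff_dvd]
    push_cast
    rw [← hs]; ring
  have hp0 : 0 < p := pp.pos
  obtain ⟨j, k, hk0, hkn, hjk⟩ := Real.exists_int_int_abs_mul_sub_le ((s : ℝ) / p)
    (Nat.sqrt_pos.mpr hp0)
  have hpR : (0 : ℝ) < p := by exact_mod_cast hp0
  have hk2 : k ^ 2 ≤ p := by
    have := Nat.sqrt_le' p
    zify at this
    nlinarith
  have hx2 : (k * s - j * p) ^ 2 < (p : ℤ) := by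
    have h1 : (p : ℝ) < ((p.sqrt : ℝ) + 1) ^ 2 := by exact_mod_cast Nat.lt_succ_sqrt' p
    have h2 : |((k * s - j * p : ℤ) : ℝ)| * ((p.sqrt : ℝ) + 1) ≤ p := by
      have : ((k * s - j * p : ℤ) : ℝ) = p * (k * (s / p) - j) := by
        push_cast; field_simp
      rw [this, abs_mul, abs_of_pos hpR, mul_assoc]
      rw [le_div_iff₀ (by positivity)] at hjk
      nlinarith
    have h3 : ((k * s - j * p : ℤ) : ℝ) ^ 2 < p := by
      by_contra! hc
      have h4 := mul_self_le_mul_self (by positivity) h2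
      have : |((k * s - j * p : ℤ) : ℝ)| ^ 2 * ((p.sqrt : ℝ) + 1) ^ 2 ≤ p * p := by nlinarith
      rw [sq_abs] at this
      nlinarith
    exact_mod_cast h3
  obtain ⟨m, hm⟩ : (p : ℤ) ∣ (k * s - j * p) ^ 2 + 2 * k ^ 2 := by
    obtain ⟨c, hc⟩ := hs
    exact ⟨k ^ 2 * c - 2 * k * s * j + j ^ 2 * p, by linear_combination k ^ 2 * hc⟩
  have hpZ : (0 : ℤ) < p := by exact_mod_cast hp0
  have hm0 : 0 < m := by
    by_contra! hc
    have : 0 < k ^ 2 := by positivity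
    nlinarith [sq_nonneg (k * s - j * p)]
  have hm3 : m < 3 := by
    by_contra! hc
    nlinarith
  generalize k * s - j * p = x at *
  -- `x² + 2k²` is `p` or `2p`; in the second case `x = 2u` and `k² + 2u² = p`
  interval_cases m
  · exact ⟨x, k, by linarith⟩
  · have : (2 : ℤ) ∣ x := Int.prime_two.dvd_of_dvd_pow (n := 2) ⟨p - k ^ 2, by linarith⟩
    obtain ⟨u, rfl⟩ := this
    exact ⟨k, u, by linarith⟩

/-- The Hecke recursion at `p` for the number of representations by `x² + 2y²`. -/
lemma ncard_repSet_prime_mul {p N : ℕ} (pp : p.Prime) :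
    ((repSet (p * N)).ncard : ℤ) = (1 + ZMod.χ₈' p) * (repSet N).ncard
      - ZMod.χ₈' p * (if p ∣ N then (repSet (N / p)).ncard else 0 : ℕ) := by
  have ppZ := Nat.prime_iff_prime_int.mp pp
  rcases eq_or_ne p 2 with rfl | hp2
  · have h0 : ZMod.χ₈' ((2 : ℕ) : ZMod 8) = 0 := by decide
    have : repSet (2 * N) = mulBy 0 1 '' repSet N := by
      apply Set.Subset.antisymm
      · intro z hz
        refine mem_image_mulBy pp (by norm_num) hz ?_
        rw [mem_repSet] at hz
        push_cast at hz
        have : (2 : ℤ) ∣ z.1 := Int.prime_two.dvd_of_dvd_pow (n := 2) ⟨N - z.2 ^ 2, by linarith⟩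
        simpa using this
      · rintro _ ⟨z, hz, rfl⟩
        exact mulBy_mem (by norm_num) hz
    rw [h0, this, Set.ncard_image_of_injective _ (mulBy_injective (by norm_num))]
    ring
  have := Fact.mk pp
  have hodd : p % 2 = 1 := (pp.eq_two_or_odd).resolve_left hp2
  have hsq := ZMod.exists_sq_eq_neg_two_iff (p := p) hp2
  have hχ := ZMod.χ₈'_nat_eq_if_mod_eight p
  rw [if_neg (by omega)] at hχ
  rw [← ncard_scaled pp.ne_zero]
  split_ifs at hχ with h8
  · -- `p` splits: every element of norm `p * N` is a multiple of `a + b√-2` or of `a - b√-2`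
    obtain ⟨a, b, hab⟩ := exists_rep_prime pp (hsq.mpr h8)
    have hab' : a ^ 2 + 2 * (-b) ^ 2 = p := by rw [neg_sq]; exact hab
    have hp0 : (p : ℤ) ≠ 0 := ppZ.ne_zero
    have hpa : ¬ (p : ℤ) ∣ 2 * a := by
      intro hd
      have hd2 : ¬ (p : ℤ) ∣ 2 := by
        intro h
        have := Nat.le_of_dvd two_pos (by exact_mod_cast h : p ∣ 2)
        have := pp.two_le
        omega
      have ha : (p : ℤ) ∣ a := (ppZ.dvd_or_dvd hd).resolve_left hd2
      have hb : (p : ℤ) ∣ b := by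
        have : (p : ℤ) ∣ 2 * b ^ 2 := by
          rw [show 2 * b ^ 2 = p - a ^ 2 by linarith]
          exact dvd_sub dvd_rfl (dvd_pow ha two_ne_zero)
        exact ppZ.dvd_of_dvd_pow ((ppZ.dvd_or_dvd this).resolve_left hd2)
      obtain ⟨u, rfl⟩ := ha
      obtain ⟨v, rfl⟩ := hb
      have : (p : ℤ) * (u ^ 2 + 2 * v ^ 2) = 1 := mul_left_cancel₀ hp0 (by linear_combination hab)
      exact ppZ.not_isUnit (IsUnit.of_mul_eq_one _ this)
    have hunion : repSet (p * N) = mulBy a b '' repSet N ∪ mulBy a (-b) '' repSet N := by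
      apply Set.Subset.antisymm
      · intro z hz
        have : (p : ℤ) ∣ (a * z.2 - b * z.1) * (a * z.2 - -b * z.1) := by
          have hz' := mem_repSet.mp hz
          push_cast at hz'
          exact ⟨z.2 ^ 2 - b ^ 2 * N, by linear_combination z.2 ^ 2 * hab - b ^ 2 * hz'⟩
        rcases ppZ.dvd_or_dvd this with h | h
        · exact Or.inl (mem_image_mulBy pp hab hz h)
        · exact Or.inr (mem_image_mulBy pp hab' hz h)
      · rintro _ (⟨z, hz, rfl⟩ | ⟨z, hz, rfl⟩)
        · exact mulBy_mem hab hz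
        · exact mulBy_mem hab' hz
    have hinter : mulBy a b '' repSet N ∩ mulBy a (-b) '' repSet N =
        {z | z ∈ repSet (p * N) ∧ (p : ℤ) ∣ z.1 ∧ (p : ℤ) ∣ z.2} := by
      ext z
      constructor
      · rintro ⟨⟨w, hw, rfl⟩, ⟨w', hw', h⟩⟩
        refine ⟨mulBy_mem hab hw, ?_⟩
        set z := mulBy a b w with hz
        -- both `z(a - b√-2)` and `z(a + b√-2)` are multiples of `p`
        have e1 : a * z.1 + 2 * b * z.2 = p * w.1 := by
          rw [hz, mulBy]; linear_combination w.1 * hab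
        have e2 : a * z.2 - b * z.1 = p * w.2 := by
          rw [hz, mulBy]; linear_combination w.2 * hab
        have e3 : a * z.1 - 2 * b * z.2 = p * w'.1 := by
          rw [← h, mulBy]; linear_combination w'.1 * hab
        have e4 : a * z.2 + b * z.1 = p * w'.2 := by
          rw [← h, mulBy]; linear_combination w'.2 * hab
        exact ⟨(ppZ.dvd_or_dvd ⟨w.1 + w'.1, by linear_combination e1 + e3⟩).resolve_left hpa,
          (ppZ.dvd_or_dvd ⟨w.2 + w'.2, by linear_combination e2 + e4⟩).resolve_left hpa⟩
      · rintro ⟨hz, h1, h2⟩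
        exact ⟨mem_image_mulBy pp hab hz (dvd_sub (h2.mul_left _) (h1.mul_left _)),
          mem_image_mulBy pp hab' hz (dvd_sub (h2.mul_left _) (h1.mul_left _))⟩
    have hcard := Set.ncard_union_add_ncard_inter (mulBy a b '' repSet N)
      (mulBy a (-b) '' repSet N) ((finite_repSet N).image _) ((finite_repSet N).image _)
    rw [← hunion, hinter, Set.ncard_image_of_injective _ (mulBy_injective (hab ▸ hp0)),
      Set.ncard_image_of_injective _ (mulBy_injective (hab' ▸ hp0))] at hcard
    rw [hχ]
    zify at hcard
    linarith
  · -- `p` is inert: an element of norm divisible by `p` is divisible by `p`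
    have : {z | z ∈ repSet (p * N) ∧ (p : ℤ) ∣ z.1 ∧ (p : ℤ) ∣ z.2} = repSet (p * N) := by
      refine Set.Subset.antisymm (fun z hz => hz.1) fun z hz => ⟨hz, ?_⟩
      have hz0 : (z.1 : ZMod p) ^ 2 + 2 * (z.2 : ZMod p) ^ 2 = 0 := by
        have := congrArg (Int.cast : ℤ → ZMod p) (mem_repSet.mp hz)
        push_cast at this
        simpa using this
      have hy : (z.2 : ZMod p) = 0 := by
        by_contra hy
        refine h8 (hsq.mp ⟨z.1 / z.2, ?_⟩)
        field_simp
        linear_combination -hz0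
      have hx : (z.1 : ZMod p) = 0 := by simpa [hy] using hz0
      exact ⟨(ZMod.intCast_zmod_eq_zero_iff_dvd _ _).mp hx,
        (ZMod.intCast_zmod_eq_zero_iff_dvd _ _).mp hy⟩
    rw [hχ, this]
    ring

/-- The Hecke recursion at `p` for the divisor sums of `χ₈'`. -/
lemma sum_divisors_prime_mul {p N : ℕ} (pp : p.Prime) (hN : N ≠ 0) :
    ∑ d ∈ (p * N).divisors, ZMod.χ₈' d = (1 + ZMod.χ₈' p) * ∑ d ∈ N.divisors, ZMod.χ₈' d
      - ZMod.χ₈' p * (if p ∣ N then ∑ d ∈ (N / p).divisors, ZMod.χ₈' d else 0) := by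
  have hinj : Function.Injective (p * ·) := fun _ _ h => Nat.eq_of_mul_eq_mul_left pp.pos h
  have himg (M : ℕ) : ∑ d ∈ M.divisors.image (p * ·), ZMod.χ₈' (d : ZMod 8) =
      ZMod.χ₈' p * ∑ d ∈ M.divisors, ZMod.χ₈' d := by
    rw [Finset.sum_image hinj.injOn, Finset.mul_sum]
    exact Finset.sum_congr rfl fun d _ => by rw [Nat.cast_mul, map_mul]
  have hunion : (p * N).divisors = N.divisors ∪ N.divisors.image (p * ·) := by
    ext d
    simp only [Nat.mem_divisors, Finset.mem_union, Finset.mem_image]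
    constructor
    · rintro ⟨hd, -⟩
      by_cases h : p ∣ d
      · obtain ⟨e, rfl⟩ := h
        exact Or.inr ⟨e, ⟨Nat.dvd_of_mul_dvd_mul_left pp.pos hd, hN⟩, rfl⟩
      · exact Or.inl ⟨(((Nat.Prime.coprime_iff_not_dvd pp).mpr h).symm).dvd_of_dvd_mul_left hd, hN⟩
    · rintro (⟨h, -⟩ | ⟨e, ⟨h, -⟩, rfl⟩)
      · exact ⟨h.mul_left _, mul_ne_zero pp.ne_zero hN⟩
      · exact ⟨mul_dvd_mul_left _ h, mul_ne_zero pp.ne_zero hN⟩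
  have hinter : N.divisors ∩ N.divisors.image (p * ·) =
      if p ∣ N then (N / p).divisors.image (p * ·) else ∅ := by
    split_ifs with h
    · obtain ⟨M, rfl⟩ := h
      rw [Nat.mul_div_cancel_left _ pp.pos]
      ext d
      simp only [Nat.mem_divisors, Finset.mem_inter, Finset.mem_image]
      constructor
      · rintro ⟨⟨h, -⟩, ⟨e, -, rfl⟩⟩
        exact ⟨e, ⟨Nat.dvd_of_mul_dvd_mul_left pp.pos h, right_ne_zero_of_mul hN⟩, rfl⟩
      · rintro ⟨e, ⟨h, -⟩, rfl⟩
        exact ⟨⟨mul_dvd_mul_left _ h, hN⟩, e, ⟨h.mul_left _, hN⟩, rfl⟩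
    · ext d
      simp only [Nat.mem_divisors, Finset.mem_inter, Finset.mem_image, Finset.notMem_empty,
        iff_false]
      rintro ⟨⟨h', -⟩, ⟨e, -, rfl⟩⟩
      exact h ((dvd_mul_right _ _).trans h')
  have hsum := Finset.sum_union_inter (s₁ := N.divisors) (s₂ := N.divisors.image (p * ·))
    (f := fun d => ZMod.χ₈' (d : ZMod 8))
  rw [← hunion, hinter, himg] at hsum
  split_ifs at hsum ⊢
  · rw [himg] at hsum
    linarith
  · rw [Finset.sum_empty] at hsum
    linarith

/-- The classical formula for the number of representations by `x² + 2y²`. -/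
lemma ncard_repSet {N : ℕ} (hN : N ≠ 0) :
    ((repSet N).ncard : ℤ) = 2 * ∑ d ∈ N.divisors, ZMod.χ₈' d := by
  induction N using Nat.strong_induction_on with
  | _ N ih =>
    rcases eq_or_ne N 1 with rfl | h1
    · simp [ncard_repSet_one]
    · obtain ⟨p, pp, M, rfl⟩ := Nat.exists_prime_and_dvd h1
      have hM : M ≠ 0 := right_ne_zero_of_mul hN
      have hlt : M < p * M := lt_mul_of_one_lt_left (Nat.pos_of_ne_zero hM) pp.one_lt
      rw [ncard_repSet_prime_mul pp, sum_divisors_prime_mul pp hM, ih M hlt hM]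
      split_ifs with h
      · rw [ih (M / p) ((Nat.div_le_self _ _).trans_lt hlt)
          (Nat.div_pos (Nat.le_of_dvd (Nat.pos_of_ne_zero hM) h) pp.pos).ne']
        ring
      · push_cast; ring

/-! ### The Dirichlet series -/

/-- The factorization `χ_{24} = χ_{-3} χ_{-8}` and the multiplicativity of `χ_{-3}` combined. -/
lemma chi24_mul_chiNeg3 (d e : ℕ) : chi24 d * chiNeg3 e = chiNeg3 (d * e) * (ZMod.χ₈' d : ℤ) := by
  have h24 : chi24 d = chiNeg3 d * (ZMod.χ₈' d : ℤ) := by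
    rw [ZMod.χ₈'_nat_eq_if_mod_eight, chi24, chiNeg3]
    have h3 : d % 3 = d % 24 % 3 := by omega
    have h2 : d % 2 = d % 24 % 2 := by omega
    have h8 : d % 8 = d % 24 % 8 := by omega
    rw [h3, h2, h8]
    have : d % 24 < 24 := Nat.mod_lt _ (by norm_num)
    generalize d % 24 = k at *
    interval_cases k <;> norm_num
  have h3 : chiNeg3 (d * e) = chiNeg3 d * chiNeg3 e := by
    simp only [chiNeg3, Nat.mul_mod d e 3]
    have : d % 3 < 3 := Nat.mod_lt _ (by norm_num)
    have : e % 3 < 3 := Nat.mod_lt _ (by norm_num)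
    generalize d % 3 = k at *
    generalize e % 3 = l at *
    interval_cases k <;> interval_cases l <;> norm_num
  rw [h24, h3]
  ring

lemma norm_chi24_le (n : ℕ) : ‖chi24 n‖ ≤ 1 := by
  unfold chi24; split_ifs <;> simp

lemma norm_chiNeg3_le (n : ℕ) : ‖chiNeg3 n‖ ≤ 1 := by
  unfold chiNeg3; split_ifs <;> simp

lemma term_eq_div (χ : ℕ → ℂ) {t : ℂ} (ht : t ≠ 0) (n : ℕ) :
    LSeries.term χ t n = χ n / (n : ℂ) ^ t := by
  rcases eq_or_ne n 0 with rfl | hn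
  · simp [Complex.zero_cpow ht]
  · rw [LSeries.term_of_ne_zero hn]

lemma dirichletL_eq_LSeries (χ : ℕ → ℂ) {t : ℂ} (ht : t ≠ 0) : dirichletL χ t = LSeries χ t :=
  tsum_congr fun n => (term_eq_div χ ht n).symm

/-- The form `x² + 2y²`, with values in `ℕ` so that they can index a Dirichlet series. -/
def quadForm (z : ℤ × ℤ) : ℕ := z.1.natAbs ^ 2 + 2 * z.2.natAbs ^ 2

lemma intCast_quadForm (z : ℤ × ℤ) : (quadForm z : ℤ) = z.1 ^ 2 + 2 * z.2 ^ 2 := by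
  simp [quadForm]

lemma complexCast_quadForm (z : ℤ × ℤ) :
    (quadForm z : ℂ) = (z.1 : ℂ) ^ 2 + 2 * (z.2 : ℂ) ^ 2 := by
  exact_mod_cast congrArg (Int.cast : ℤ → ℂ) (intCast_quadForm z)

lemma preimage_quadForm (N : ℕ) : quadForm ⁻¹' {N} = repSet N := by
  ext z
  rw [mem_repSet, ← intCast_quadForm, Nat.cast_inj]
  rfl

/-- Modulo `3` the form `x² + 2y²` is `x² - y²`. -/
lemma chiNeg3_quadForm (z : ℤ × ℤ) :
    chiNeg3 (quadForm z) = (if (3 : ℤ) ∣ z.2 then 1 else 0) - (if (3 : ℤ) ∣ z.1 then 1 else 0) := by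
  have h (n : ℤ) : ((3 : ℤ) ∣ n ↔ n.natAbs % 3 = 0) := by omega
  have hmod : quadForm z % 3 =
      ((z.1.natAbs % 3) ^ 2 % 3 + (2 % 3) * ((z.2.natAbs % 3) ^ 2 % 3) % 3) % 3 := by
    rw [quadForm, Nat.add_mod, Nat.mul_mod, Nat.pow_mod, Nat.pow_mod z.2.natAbs]
  simp only [h, chiNeg3, hmod]
  have : z.1.natAbs % 3 < 3 := Nat.mod_lt _ (by norm_num)
  have : z.2.natAbs % 3 < 3 := Nat.mod_lt _ (by norm_num)
  generalize z.1.natAbs % 3 = k at *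
  generalize z.2.natAbs % 3 = l at *
  interval_cases k <;> interval_cases l <;> norm_num

lemma summable_quadForm {t : ℂ} (ht : 1 < t.re) :
    Summable fun z : ℤ × ℤ => 1 / (quadForm z : ℂ) ^ t := by
  have ht0 : t ≠ 0 := by rintro rfl; norm_num at ht
  have hs := (finTwoArrowEquiv ℤ).symm.summable_iff.mpr
    (EisensteinSeries.summable_one_div_norm_rpow (k := 2 * t.re) (by linarith))
  refine Summable.of_norm_bounded hs fun z => ?_
  simp only [Function.comp_apply, finTwoArrowEquiv_symm_apply]
  rcases eq_or_ne z 0 with rfl | hz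
  · have : quadForm 0 = 0 := by simp [quadForm]
    simp only [this, Nat.cast_zero, Complex.zero_cpow ht0, div_zero, norm_zero]
    positivity
  · have hM : (0 : ℝ) < ‖![z.1, z.2]‖ := by
      rw [norm_pos_iff]
      intro h
      apply hz
      ext
      · simpa using congrFun h 0
      · simpa using congrFun h 1
    have hle : ‖![z.1, z.2]‖ ^ 2 ≤ (quadForm z : ℝ) := by
      rw [EisensteinSeries.norm_eq_max_natAbs, quadForm]
      norm_cast
      simp only [Matrix.cons_val_zero, Matrix.cons_val_one]
      rcases max_choice z.1.natAbs z.2.natAbs with h | h <;> rw [h] <;> nlinarith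
    have hQ : (0 : ℝ) < quadForm z := lt_of_lt_of_le (by positivity) hle
    have hn := Complex.norm_cpow_eq_rpow_re_of_pos hQ t
    rw [Complex.ofReal_natCast] at hn
    rw [norm_div, norm_one, hn, Real.rpow_neg hM.le, one_div, Real.rpow_mul hM.le, Real.rpow_two]
    gcongr

/-- The right-hand lattice sum as a sum of `χ_{-3}(Q) Q^{-t}` over the values of the single form
`Q = x² + 2y²`. -/
lemma lattice_eq_tsum_quadForm {t : ℂ} (ht : 1 < t.re) :
    ∑' p : {p : ℤ × ℤ // p ≠ 0},
        (1 / (((p : ℤ × ℤ).1 : ℂ) ^ 2 + 18 * ((p : ℤ × ℤ).2 : ℂ) ^ 2) ^ t -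
          1 / (2 * ((p : ℤ × ℤ).1 : ℂ) ^ 2 + 9 * ((p : ℤ × ℤ).2 : ℂ) ^ 2) ^ t) =
      ∑' z : ℤ × ℤ, chiNeg3 (quadForm z) / (quadForm z : ℂ) ^ t := by
  have ht0 : t ≠ 0 := by rintro rfl; norm_num at ht
  set f : ℤ × ℤ → ℂ := fun z => 1 / (quadForm z : ℂ) ^ t with hf
  have hfs : Summable f := summable_quadForm ht
  set i₁ : ℤ × ℤ → ℤ × ℤ := fun p => (p.1, 3 * p.2) with hi₁
  set i₂ : ℤ × ℤ → ℤ × ℤ := fun p => (3 * p.2, p.1) with hi₂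
  have inj₁ : Function.Injective i₁ := by
    rintro ⟨a, b⟩ ⟨c, d⟩ h
    simp only [hi₁, Prod.mk.injEq] at h ⊢
    omega
  have inj₂ : Function.Injective i₂ := by
    rintro ⟨a, b⟩ ⟨c, d⟩ h
    simp only [hi₂, Prod.mk.injEq] at h ⊢
    omega
  set g₁ : ℤ × ℤ → ℂ := {z : ℤ × ℤ | (3 : ℤ) ∣ z.2}.indicator f with hg₁
  set g₂ : ℤ × ℤ → ℂ := {z : ℤ × ℤ | (3 : ℤ) ∣ z.1}.indicator f with hg₂
  have hs₁ : Summable g₁ := hfs.indicator _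
  have hs₂ : Summable g₂ := hfs.indicator _
  have supp₁ : Function.support g₁ ⊆ Set.range i₁ := by
    refine Set.support_indicator_subset.trans ?_
    rintro ⟨x, y⟩ ⟨n, hn⟩
    exact ⟨(x, n), by simp only [hi₁]; rw [← hn]⟩
  have supp₂ : Function.support g₂ ⊆ Set.range i₂ := by
    refine Set.support_indicator_subset.trans ?_
    rintro ⟨x, y⟩ ⟨n, hn⟩
    exact ⟨(y, n), by simp only [hi₂]; rw [← hn]⟩
  have e₁ (p : ℤ × ℤ) : g₁ (i₁ p) = 1 / ((p.1 : ℂ) ^ 2 + 18 * (p.2 : ℂ) ^ 2) ^ t := by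
    rw [hg₁, Set.indicator_of_mem (by exact dvd_mul_right _ _), hf]
    simp only [complexCast_quadForm, hi₁]
    congr 2
    push_cast; ring
  have e₂ (p : ℤ × ℤ) : g₂ (i₂ p) = 1 / (2 * (p.1 : ℂ) ^ 2 + 9 * (p.2 : ℂ) ^ 2) ^ t := by
    rw [hg₂, Set.indicator_of_mem (by exact dvd_mul_right _ _), hf]
    simp only [complexCast_quadForm, hi₂]
    congr 2
    push_cast; ring
  simp_rw [← e₁, ← e₂]
  -- the origin contributes `1 / 0 ^ t - 1 / 0 ^ t = 0`
  have hsupp : Function.support (fun p => g₁ (i₁ p) - g₂ (i₂ p)) ⊆ {p | p ≠ 0} := by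
    rintro p hp rfl
    apply hp
    simp [e₁, e₂]
  rw [show (∑' p : {p : ℤ × ℤ // p ≠ 0}, (g₁ (i₁ p) - g₂ (i₂ p))) =
    ∑' p : ℤ × ℤ, (g₁ (i₁ p) - g₂ (i₂ p)) from tsum_subtype_eq_of_support_subset hsupp,
    show (∑' p : ℤ × ℤ, (g₁ (i₁ p) - g₂ (i₂ p))) = _ from
      (hs₁.comp_injective inj₁).tsum_sub (hs₂.comp_injective inj₂)]
  simp only [Function.comp_apply]
  rw [inj₁.tsum_eq supp₁,
    inj₂.tsum_eq supp₂, ← hs₁.tsum_sub hs₂]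
  refine tsum_congr fun z => ?_
  rw [chiNeg3_quadForm]
  simp only [hg₁, hg₂, hf, Set.indicator_apply, Set.mem_ofPred_eq]
  split_ifs <;> simp [neg_div]

theorem chi24_chiNeg3_lattice (t : ℂ) (ht : 1 < t.re) :
    2 * dirichletL chi24 t * dirichletL chiNeg3 t =
      ∑' p : {p : ℤ × ℤ // p ≠ 0},
        (1 / (((p : ℤ × ℤ).1 : ℂ) ^ 2 + 18 * ((p : ℤ × ℤ).2 : ℂ) ^ 2) ^ t -
          1 / (2 * ((p : ℤ × ℤ).1 : ℂ) ^ 2 + 9 * ((p : ℤ × ℤ).2 : ℂ) ^ 2) ^ t) := by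
  have ht0 : t ≠ 0 := by rintro rfl; norm_num at ht
  have hsum : Summable fun z : ℤ × ℤ => chiNeg3 (quadForm z) / (quadForm z : ℂ) ^ t := by
    refine Summable.of_norm_bounded (summable_quadForm ht).norm fun z => ?_
    rw [norm_div, norm_div, norm_one]
    gcongr
    exact norm_chiNeg3_le _
  rw [lattice_eq_tsum_quadForm ht, ← (hsum.hasSum.tsum_fiberwise quadForm).tsum_eq, mul_assoc,
    dirichletL_eq_LSeries _ ht0, dirichletL_eq_LSeries _ ht0,
    ← LSeries_convolution'
      (LSeriesSummable_of_bounded_of_one_lt_re (fun n _ => norm_chi24_le n) ht)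
      (LSeriesSummable_of_bounded_of_one_lt_re (fun n _ => norm_chiNeg3_le n) ht),
    LSeries, ← tsum_mul_left]
  refine tsum_congr fun N => ?_
  have hfib (b : quadForm ⁻¹' {N}) :
      chiNeg3 (quadForm b) / (quadForm b : ℂ) ^ t = chiNeg3 N / (N : ℂ) ^ t := by
    rw [show quadForm b = N from b.2]
  rw [tsum_congr hfib, tsum_const, Nat.card_coe_set_eq, preimage_quadForm, nsmul_eq_mul,
    term_eq_div _ ht0]
  rcases eq_or_ne N 0 with rfl | hN
  · simp [Complex.zero_cpow ht0]
  have hr : ((repSet N).ncard : ℂ) = 2 * ∑ d ∈ N.divisors, ((ZMod.χ₈' d : ℤ) : ℂ) := by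
    exact_mod_cast congrArg (Int.cast : ℤ → ℂ) (ncard_repSet hN)
  have hconv : LSeries.convolution chi24 chiNeg3 N =
      chiNeg3 N * ∑ d ∈ N.divisors, ((ZMod.χ₈' d : ℤ) : ℂ) := by
    rw [LSeries.convolution_def, Finset.mul_sum,
      ← Nat.sum_divisorsAntidiagonal (fun d _ => chiNeg3 N * ((ZMod.χ₈' d : ℤ) : ℂ))]
    refine Finset.sum_congr rfl fun q hq => ?_
    rw [chi24_mul_chiNeg3, (Nat.mem_divisorsAntidiagonal.mp hq).1]
  rw [hr, hconv]
  ring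
end
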